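/- Let μ be an equilibrium measure of F. If K ⊆ ℂ is an infinite compact set satisfying {g(w) : w ∈ ℂ, f(w) ∈ K} = K (i.e. F⁻¹(K) = K) and {f(w) : w ∈ ℂ, g(w) ∈ K} = K (i.e. F(K) = K), then the support of μ is contained in K. -/

import Mathlib

/-!
Write `d = deg f > e = deg g`. For a starting point `ζ`, the value `Λⁿφ(ζ)` is the mean of `φ` over the
multiset `F⁻ⁿ(ζ)` of `dⁿ` backward images (`backOrbit`, `Lam_iterate`). It suffices to show that for
`x ∉ K` only `O(eⁿ)` of these points lie near `x`, uniformly for `ζ` in a disc far from `K`: a bump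
function at `x` then has `μ`-integral zero, by testing against uniform measure on that disc.

The count is a potential-theoretic argument made with polynomials only. Iterating the identity
`∏_{f w = ζ} |y - g w| = kap · ∏_{g v = y} |ζ - f v|` shows that the monic polynomial with root multiset
`F⁻ⁿ(ζ)` is at most `kap ^ geomExp n · R ^ (eⁿ)` on `K`, since the forward orbits of points of `K` stay
in `K` (`prod_norm_backOrbit_le`). Conversely, averaging over the fibres of `f` turns a monic polynomial
of degree `m dⁿ` into a monic polynomial of degree `m eⁿ` with comparable norm (`tau_mul_le`). Applied to
powers of near-extremal polynomials this gives a geometric lower bound for the minimal norms `tau`, that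
is, positive capacity (`exists_pow_le_tau`). Together, the orbit polynomial is extremal on `K` up to a
factor `C ^ (eⁿ)`.

If `x` lies in the unbounded component of the complement of `K`, pole pushing in the style of Runge
gives a monic `r` of some degree `N` with `|r(y)| ≤ ρ |y - z|ᴺ` on `K`, `ρ < 1`, for all `z` near `x`
(`exists_replacement`). Replacing `(X - z)ᴺ` by `r` for each orbit point near `x` gains a factor `ρ` each
time, and near-extremality limits the number of such points to `O(eⁿ)` (`countP_backOrbit_le`). If `x`
lies in a bounded component, no orbit point comes near `x` at all, because backward images of points of
the unbounded component stay in it (`InOuter.step`).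
-/

open MeasureTheory Polynomial Filter
open scoped ENNReal

/-- The Perron–Frobenius operator of the polynomial correspondence `F = f ∘ g⁻¹`:
`Λφ(z) = (deg f)⁻¹ Σ_w φ(g(w))`, the sum running over the roots `w` of `f - z`
counted with multiplicity. -/
noncomputable def Lam (f g : Polynomial ℂ) (φ : ℂ → ℝ) : ℂ → ℝ :=
  fun z => (f.natDegree : ℝ)⁻¹ * (((f - C z).roots).map (fun w => φ (g.eval w))).sum

/-- An equilibrium measure of the correspondence `F = f ∘ g⁻¹`: a compactly supported
Borel probability measure `μ` on `ℂ` such that for every compactly supported probability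
measure `ν` with bounded density with respect to Lebesgue measure and every bounded
continuous `φ`, `∫ Λⁿφ dν → ∫ φ dμ`. -/
def IsEquilibrium (f g : Polynomial ℂ) (μ : Measure ℂ) : Prop :=
  IsProbabilityMeasure μ ∧ (∃ K : Set ℂ, IsCompact K ∧ μ Kᶜ = 0) ∧
  ∀ ν : Measure ℂ, IsProbabilityMeasure ν →
    (∃ K : Set ℂ, IsCompact K ∧ ν Kᶜ = 0) →
    (∃ h : ℂ → ℝ≥0∞, (∃ B : ℝ≥0∞, B < ⊤ ∧ ∀ z, h z ≤ B) ∧ ν = volume.withDensity h) →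
    ∀ φ : ℂ → ℝ, Continuous φ → (∃ M : ℝ, ∀ z, |φ z| ≤ M) →
      Tendsto (fun n => ∫ z, ((Lam f g)^[n] φ) z ∂ν) atTop (nhds (∫ z, φ z ∂μ))

/-- The (topological) support of a measure on `ℂ`: the set of points all of whose
neighborhoods have positive measure. -/
def measSupport (ν : Measure ℂ) : Set ℂ :=
  {z : ℂ | ∀ r : ℝ, 0 < r → 0 < ν (Metric.ball z r)}

/-! ### The averaging operator on polynomials -/

lemma leadingCoeff_sub_C' {f : ℂ[X]} (hf : 0 < f.natDegree) (y : ℂ) :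
    (f - C y).leadingCoeff = f.leadingCoeff := by
  rw [leadingCoeff, natDegree_sub_C, coeff_sub, coeff_C_of_ne_zero hf.ne', sub_zero,
    coeff_natDegree]

lemma sub_C_ne_zero {f : ℂ[X]} (hf : 0 < f.natDegree) (y : ℂ) : f - C y ≠ 0 := by
  intro h
  have := congrArg natDegree h
  rw [natDegree_sub_C, natDegree_zero] at this
  omega

lemma degree_C_mul_le' (a : ℂ) (p : ℂ[X]) : (C a * p).degree ≤ p.degree := by
  rw [degree_mul]
  simpa using add_le_add_left (degree_C_le (a := a)) p.degree

lemma mem_roots_sub_C'' {f : ℂ[X]} (hf : 0 < f.natDegree) {y w : ℂ} :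
    w ∈ (f - C y).roots ↔ f.eval w = y := by
  rw [mem_roots (sub_C_ne_zero hf y)]
  simp [sub_eq_zero]

lemma card_roots_sub_C'' (f : ℂ[X]) (y : ℂ) : (f - C y).roots.card = f.natDegree := by
  rw [IsAlgClosed.card_roots_eq_natDegree, natDegree_sub_C]

/-- The trace of `p` over a multiset `S` is a coefficient of the remainder of `p * P'` modulo
`P = ∏ (X - a)`. The factor `X` in front of `r` makes the statement correct for empty `S` too. -/
lemma exists_rem_derivative (p : ℂ[X]) (S : Multiset ℂ) :
    ∃ t r : ℂ[X], p * derivative (S.map fun a => X - C a).prod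
        = t * (S.map fun a => X - C a).prod + r ∧
      r.degree < S.card ∧ (X * r).coeff S.card = (S.map fun a => p.eval a).sum := by
  induction S using Multiset.induction_on with
  | empty => exact ⟨0, 0, by simp, by simp, by simp⟩
  | cons a S ih =>
    obtain ⟨t, r, h1, h2, h3⟩ := ih
    set P := (S.map fun a => X - C a).prod with hP
    obtain ⟨u, hu⟩ : X - C a ∣ p - C (p.eval a) := by
      rw [dvd_iff_isRoot]; simp
    have hPm : P.Monic := monic_multiset_prod_of_monic _ _ fun a _ => monic_X_sub_C a
    have hPd : P.natDegree = S.card := by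
      rw [hP, natDegree_multiset_prod_X_sub_C_eq_card]
    refine ⟨t + u, C (p.eval a) * P + (X - C a) * r, ?_, ?_, ?_⟩
    · simp only [Multiset.map_cons, Multiset.prod_cons, ← hP, derivative_mul, derivative_sub,
        derivative_X, derivative_C, sub_zero, one_mul, mul_add]
      linear_combination (X - C a) * h1 + P * hu
    · rw [Multiset.card_cons]
      refine lt_of_le_of_lt (degree_add_le _ _) (max_lt ?_ ?_)
      · refine lt_of_le_of_lt (degree_C_mul_le' _ _) ?_
        rw [degree_eq_natDegree hPm.ne_zero, hPd]
        exact_mod_cast Nat.lt_succ_self _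
      · rw [degree_mul, degree_X_sub_C]
        by_cases hr : r = 0
        · simp [hr]
        rw [degree_eq_natDegree hr] at h2 ⊢
        norm_cast at h2 ⊢
        omega
    · rw [Multiset.card_cons, coeff_X_mul, Multiset.map_cons, Multiset.sum_cons, ← h3, coeff_add,
        coeff_C_mul, ← hPd, hPm.coeff_natDegree, sub_mul, coeff_sub, coeff_C_mul, hPd,
        coeff_eq_zero_of_degree_lt h2]
      ring

/-- Expansion of `s` in base `f`: the top coefficients of the digits are collected in `q`. -/
lemma exists_digits (f : ℂ[X]) (hf : 0 < f.natDegree) (M : ℕ) :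
    ∀ s : ℂ[X], s.degree < ((M + 1) * f.natDegree : ℕ) →
      ∃ q : ℂ[X], q.natDegree ≤ M ∧
        q.coeff M = s.coeff (M * f.natDegree + (f.natDegree - 1)) * (f.leadingCoeff ^ M)⁻¹ ∧
        ∀ y : ℂ, ∃ t r : ℂ[X], s = t * (f - C y) + r ∧ r.degree < f.natDegree ∧
          r.coeff (f.natDegree - 1) = q.eval y := by
  have hf0 : f ≠ 0 := by rintro rfl; simp at hf
  have hA : f.leadingCoeff ≠ 0 := leadingCoeff_ne_zero.mpr hf0
  induction M with
  | zero =>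
    intro s hs
    refine ⟨C (s.coeff (f.natDegree - 1)), by simp, by simp, fun y => ⟨0, s, by simp, ?_, by simp⟩⟩
    simpa using hs
  | succ M ih =>
    intro s hs
    have hdiv : f * (s / f) + s % f = s := EuclideanDomain.div_add_mod s f
    have hmod : (s % f).degree < f.natDegree := by
      have := EuclideanDomain.mod_lt s hf0
      rw [← degree_eq_natDegree hf0]; exact this
    set s1 := s / f with hs1
    set r0 := s % f with hr0
    have hs1d : s1.degree < ((M + 1) * f.natDegree : ℕ) := by
      by_cases h0 : s1 = 0
      · rw [h0, degree_zero]; exact WithBot.bot_lt_coe _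
      have h1 : (f * s1).degree < ((M + 1 + 1) * f.natDegree : ℕ) := by
        have : f * s1 = s - r0 := by rw [← hdiv]; ring
        rw [this]
        refine lt_of_le_of_lt (degree_sub_le _ _) (max_lt hs (hmod.trans_le ?_))
        exact_mod_cast Nat.le_mul_of_pos_left _ (by omega)
      rw [degree_mul, degree_eq_natDegree hf0, degree_eq_natDegree h0] at h1
      rw [degree_eq_natDegree h0]
      norm_cast at h1 ⊢
      nlinarith
    obtain ⟨q1, hq1, hq1c, hq1e⟩ := ih s1 hs1d
    refine ⟨X * q1 + C (r0.coeff (f.natDegree - 1)), ?_, ?_, ?_⟩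
    · refine natDegree_add_le_of_degree_le ?_ (by simp)
      refine natDegree_mul_le.trans ?_
      rw [natDegree_X]; omega
    · have e1 : s.coeff ((M + 1) * f.natDegree + (f.natDegree - 1))
          = f.leadingCoeff * s1.coeff (M * f.natDegree + (f.natDegree - 1)) := by
        rw [← hdiv, coeff_add, coeff_eq_zero_of_degree_lt (p := r0), add_zero]
        · have e2 : (M + 1) * f.natDegree + (f.natDegree - 1)
            = f.natDegree + (M * f.natDegree + (f.natDegree - 1)) := by ring
          rw [e2, coeff_mul_add_eq_of_natDegree_le le_rfl, coeff_natDegree]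
          by_cases h0 : s1 = 0
          · simp [h0]
          rw [degree_eq_natDegree h0] at hs1d
          norm_cast at hs1d
          have : (M + 1) * f.natDegree = M * f.natDegree + f.natDegree := by ring
          omega
        · refine hmod.trans_le ?_
          norm_cast
          nlinarith [Nat.zero_le (M * f.natDegree)]
      rw [e1, coeff_add, coeff_X_mul, hq1c, coeff_C_of_ne_zero (by omega)]
      field_simp
      ring
    · intro y
      obtain ⟨t1, r1, h1, h2, h3⟩ := hq1e y
      refine ⟨s1 + C y * t1, C y * r1 + r0, ?_, ?_, ?_⟩
      · rw [← hdiv]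
        linear_combination C y * h1
      · exact lt_of_le_of_lt (degree_add_le _ _)
          (max_lt (lt_of_le_of_lt (degree_C_mul_le' _ _) h2) hmod)
      · simp [h3]

/-- The average of a polynomial of degree `M * deg f` over the fibres of `f` is a polynomial of
degree at most `M`, with a known coefficient in degree `M`. -/
lemma exists_trace (f : ℂ[X]) (hf : 0 < f.natDegree) (M : ℕ) (p : ℂ[X])
    (hp : p.natDegree ≤ M * f.natDegree) :
    ∃ q : ℂ[X], q.natDegree ≤ M ∧
      q.coeff M = p.coeff (M * f.natDegree) * (f.leadingCoeff ^ M)⁻¹ ∧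
      ∀ y : ℂ, ((f - C y).roots.map fun w => p.eval w).sum = f.natDegree * q.eval y := by
  have hf0 : f ≠ 0 := by rintro rfl; simp at hf
  have hA : f.leadingCoeff ≠ 0 := leadingCoeff_ne_zero.mpr hf0
  have hd : (f.natDegree : ℂ) ≠ 0 := by exact_mod_cast hf.ne'
  have hder : (derivative f).natDegree ≤ f.natDegree - 1 := natDegree_derivative_le f
  have hs : (p * derivative f).degree < ((M + 1) * f.natDegree : ℕ) := by
    refine lt_of_le_of_lt degree_le_natDegree ?_
    norm_cast
    refine lt_of_le_of_lt natDegree_mul_le ?_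
    have : (M + 1) * f.natDegree = M * f.natDegree + f.natDegree := by ring
    omega
  obtain ⟨q, hq1, hq2, hq3⟩ := exists_digits f hf M _ hs
  refine ⟨C ((f.natDegree : ℂ)⁻¹ * (f.leadingCoeff)⁻¹) * q, (natDegree_C_mul_le _ _).trans hq1,
    ?_, ?_⟩
  · rw [coeff_C_mul, hq2, coeff_mul_add_eq_of_natDegree_le hp hder, coeff_derivative,
      Nat.sub_add_cancel hf, coeff_natDegree, Nat.cast_sub hf]
    field_simp
    push_cast
    ring
  · intro y
    obtain ⟨t, r, h1, h2, h3⟩ := hq3 y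
    obtain ⟨t', r', h1', h2', h3'⟩ := exists_rem_derivative p (f - C y).roots
    have hfac : f - C y = C f.leadingCoeff * ((f - C y).roots.map fun a => X - C a).prod := by
      conv_lhs => rw [(IsAlgClosed.splits (f - C y)).eq_prod_roots, leadingCoeff_sub_C' hf]
    set P := ((f - C y).roots.map fun a => X - C a).prod with hP
    rw [card_roots_sub_C''] at h2' h3'
    have hder2 : derivative f = C f.leadingCoeff * derivative P := by
      have := congrArg derivative hfac
      simpa using this
    -- Remainders modulo `f - y` are unique.
    have hrr : r - C f.leadingCoeff * r' = 0 := by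
      apply eq_zero_of_dvd_of_degree_lt (p := f - C y)
      · refine ⟨t' - t, ?_⟩
        linear_combination (-1 : ℂ[X]) * h1 + C f.leadingCoeff * h1' + p * hder2 - t' * hfac
      · rw [degree_eq_natDegree (sub_C_ne_zero hf y), natDegree_sub_C]
        exact lt_of_le_of_lt (degree_sub_le _ _)
          (max_lt h2 (lt_of_le_of_lt (degree_C_mul_le' _ _) h2'))
    rw [← h3', eval_mul, eval_C, ← h3, sub_eq_zero.mp hrr, coeff_C_mul]
    obtain ⟨k, hk⟩ : ∃ k, f.natDegree = k + 1 := ⟨f.natDegree - 1, by omega⟩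
    have : (X * r').coeff f.natDegree = r'.coeff (f.natDegree - 1) := by
      rw [hk, coeff_X_mul]; rfl
    rw [this]
    field_simp

/-! ### Backward orbits as multisets -/

/-- The multiset `F⁻ⁿ(ζ)` of the `n`-th backward images of `ζ` under `F = f ∘ g⁻¹`, of cardinality
`(deg f)ⁿ`. -/
noncomputable def backOrbit (f g : ℂ[X]) : ℕ → ℂ → Multiset ℂ
  | 0, ζ => {ζ}
  | n + 1, ζ => (f - C ζ).roots.bind fun w => backOrbit f g n (g.eval w)

lemma Lam_iterate (f g : ℂ[X]) (φ : ℂ → ℝ) (n : ℕ) (ζ : ℂ) :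
    (Lam f g)^[n] φ ζ = ((f.natDegree : ℝ)⁻¹) ^ n * ((backOrbit f g n ζ).map φ).sum := by
  induction n generalizing ζ with
  | zero => simp [backOrbit]
  | succ n ih =>
    rw [Function.iterate_succ_apply', Lam]
    simp only [ih, backOrbit, Multiset.map_bind, Multiset.sum_bind, Multiset.sum_map_mul_left]
    ring

lemma card_backOrbit (f g : ℂ[X]) (n : ℕ) (ζ : ℂ) :
    (backOrbit f g n ζ).card = f.natDegree ^ n := by
  induction n generalizing ζ with
  | zero => simp [backOrbit]
  | succ n ih =>
    simp only [backOrbit, Multiset.card_bind, Function.comp_def, ih, Multiset.map_const',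
      Multiset.sum_replicate, card_roots_sub_C'']
    rw [smul_eq_mul, pow_succ, mul_comm]

/-- The constant `|lead g|^deg f / |lead f|^deg g` relating the fibres of `F` and `F⁻¹`. -/
noncomputable def kap (f g : ℂ[X]) : ℝ :=
  ‖g.leadingCoeff‖ ^ f.natDegree / ‖f.leadingCoeff‖ ^ g.natDegree

/-- The exponents `∑ i < n, eⁱ dⁿ⁻¹⁻ⁱ`. -/
def geomExp (d e : ℕ) : ℕ → ℕ
  | 0 => 0
  | n + 1 => d * geomExp d e n + e ^ n

lemma geomExp_succ' (d e n : ℕ) : geomExp d e (n + 1) = e * geomExp d e n + d ^ n := by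
  induction n with
  | zero => simp [geomExp]
  | succ n ih =>
    calc geomExp d e (n + 1 + 1) = d * geomExp d e (n + 1) + e ^ (n + 1) := rfl
      _ = d * (e * geomExp d e n + d ^ n) + e ^ (n + 1) := by rw [ih]
      _ = e * (d * geomExp d e n + e ^ n) + d ^ (n + 1) := by ring

lemma geomExp_add_le {d e : ℕ} (h : e < d) (n : ℕ) : geomExp d e n + e ^ n ≤ d ^ n := by
  induction n with
  | zero => simp [geomExp]
  | succ n ih =>
    rw [geomExp, pow_succ, pow_succ]
    have h1 : (e + 1) * e ^ n ≤ d * e ^ n := Nat.mul_le_mul_right _ h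
    nlinarith [Nat.mul_le_mul_left d ih]

lemma kap_pos {f g : ℂ[X]} (hf : 0 < f.natDegree) (hg : 0 < g.natDegree) : 0 < kap f g := by
  have hf0 : f ≠ 0 := by rintro rfl; simp at hf
  have hg0 : g ≠ 0 := by rintro rfl; simp at hg
  have := norm_pos_iff.mpr (leadingCoeff_ne_zero.mpr hf0)
  have := norm_pos_iff.mpr (leadingCoeff_ne_zero.mpr hg0)
  unfold kap
  positivity

lemma norm_eval_sub {f : ℂ[X]} (hf : 0 < f.natDegree) (v y : ℂ) :
    ‖f.eval v - y‖ = ‖f.leadingCoeff‖ * ((f - C y).roots.map fun w => ‖v - w‖).prod := by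
  have h := (IsAlgClosed.splits (f - C y)).eval_eq_prod_roots v
  rw [leadingCoeff_sub_C' hf, eval_sub, eval_C] at h
  rw [h, norm_mul]
  congr 1
  have := map_multiset_prod (normHom : ℂ →*₀ ℝ) ((f - C y).roots.map fun w => v - w)
  simpa [Function.comp_def] using this

/-- Symmetry of the resultant of `f - ζ` and `g - x`. -/
lemma prod_norm_fibre {f g : ℂ[X]} (hf : 0 < f.natDegree) (hg : 0 < g.natDegree) (x ζ : ℂ) :
    ((f - C ζ).roots.map fun w => ‖x - g.eval w‖).prod =
      kap f g * ((g - C x).roots.map fun v => ‖ζ - f.eval v‖).prod := by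
  have hf0 : f ≠ 0 := by rintro rfl; simp at hf
  have hA := norm_ne_zero_iff.mpr (leadingCoeff_ne_zero.mpr hf0)
  have h1 : ∀ w, ‖x - g.eval w‖ =
      ‖g.leadingCoeff‖ * ((g - C x).roots.map fun v => ‖w - v‖).prod := fun w => by
    rw [norm_sub_rev, norm_eval_sub hg]
  have h2 : ∀ v, ‖ζ - f.eval v‖ =
      ‖f.leadingCoeff‖ * ((f - C ζ).roots.map fun w => ‖w - v‖).prod := fun v => by
    rw [norm_sub_rev, norm_eval_sub hf]
    simp_rw [norm_sub_rev v]
  simp_rw [h1, h2, Multiset.prod_map_mul, Multiset.map_const', Multiset.prod_replicate,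
    card_roots_sub_C'']
  rw [Multiset.prod_map_prod_map (f - C ζ).roots (g - C x).roots, kap]
  field_simp

/-- Iterated form of `prod_norm_fibre`: the multiset `S` is the `n`-th forward image of `x`, which
stays in `K`. -/
lemma prod_norm_backOrbit {f g : ℂ[X]} (hf : 0 < f.natDegree) (hg : 0 < g.natDegree) {K : Set ℂ}
    (hfwd : ∀ v, g.eval v ∈ K → f.eval v ∈ K) (n : ℕ) (x : ℂ) (hx : x ∈ K) :
    ∃ S : Multiset ℂ, S.card = g.natDegree ^ n ∧ (∀ y ∈ S, y ∈ K) ∧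
      ∀ ζ, ((backOrbit f g n ζ).map fun z => ‖x - z‖).prod =
        kap f g ^ geomExp f.natDegree g.natDegree n * (S.map fun y => ‖ζ - y‖).prod := by
  induction n with
  | zero => exact ⟨{x}, by simp, by simpa using hx, fun ζ => by
      simp [backOrbit, geomExp, norm_sub_rev]⟩
  | succ n ih =>
    obtain ⟨S, h1, h2, h3⟩ := ih
    refine ⟨S.bind fun y => (g - C y).roots.map fun v => f.eval v, ?_, ?_, ?_⟩
    · simp [Multiset.card_bind, card_roots_sub_C'', h1, pow_succ]
    · intro y hy
      simp only [Multiset.mem_bind, Multiset.mem_map] at hy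
      obtain ⟨y', hy', v, hv, rfl⟩ := hy
      rw [mem_roots_sub_C'' hg] at hv
      exact hfwd v (hv ▸ h2 _ hy')
    · intro ζ
      simp only [backOrbit, Multiset.map_bind, Multiset.prod_bind, h3, Multiset.prod_map_mul,
        Multiset.map_const', Multiset.prod_replicate, card_roots_sub_C'', Multiset.map_map,
        Function.comp_def]
      rw [Multiset.prod_map_prod_map (f - C ζ).roots S]
      simp_rw [norm_sub_rev (eval _ g), prod_norm_fibre hf hg, Multiset.prod_map_mul,
        Multiset.map_const', Multiset.prod_replicate, h1, geomExp]
      ring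

/-- On `K`, the monic polynomial of degree `(deg f)ⁿ` whose roots are the backward orbit of `ζ` has
modulus at most `kap ^ geomExp n`, up to a factor whose exponent is only `(deg g)ⁿ`. -/
lemma prod_norm_backOrbit_le {f g : ℂ[X]} (hf : 0 < f.natDegree) (hg : 0 < g.natDegree)
    {K : Set ℂ} (hfwd : ∀ v, g.eval v ∈ K → f.eval v ∈ K) (n : ℕ) {x ζ : ℂ} (hx : x ∈ K) {R : ℝ}
    (hR : ∀ y ∈ K, ‖ζ - y‖ ≤ R) :
    ((backOrbit f g n ζ).map fun z => ‖x - z‖).prod ≤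
      kap f g ^ geomExp f.natDegree g.natDegree n * R ^ (g.natDegree ^ n) := by
  obtain ⟨S, h1, h2, h3⟩ := prod_norm_backOrbit hf hg hfwd n x hx
  rw [h3, ← h1]
  have := kap_pos hf hg
  gcongr
  calc (S.map fun y => ‖ζ - y‖).prod ≤ (S.map fun _ => R).prod :=
        Multiset.prod_map_le_prod_map₀ _ _ (fun _ _ => norm_nonneg _) fun y hy => hR y (h2 y hy)
    _ = R ^ S.card := by simp

/-! ### Sup norms of monic polynomials on an invariant set -/

/-- Averaging `P ∘ g` over the fibres of `f` and normalising turns a monic polynomial of degree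
`m * deg f` into one of degree `m * deg g`. The sup norm on `K` is controlled because an average over
points of `K` does not exceed the maximum. -/
lemma exists_monic_step {f g : ℂ[X]} (hf : 0 < f.natDegree) (hg : 0 < g.natDegree)
    {K : Set ℂ} (hinv : ∀ v, f.eval v ∈ K → g.eval v ∈ K) (m : ℕ) {P : ℂ[X]} (hP : P.Monic)
    (hPd : P.natDegree = m * f.natDegree) {M : ℝ} (hM : ∀ y ∈ K, ‖P.eval y‖ ≤ M) :
    ∃ Q : ℂ[X], Q.Monic ∧ Q.natDegree = m * g.natDegree ∧
      ∀ y ∈ K, ‖Q.eval y‖ * kap f g ^ m ≤ M := by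
  have hf0 : f ≠ 0 := by rintro rfl; simp at hf
  have hg0 : g ≠ 0 := by rintro rfl; simp at hg
  have hA := leadingCoeff_ne_zero.mpr hf0
  have hB := leadingCoeff_ne_zero.mpr hg0
  have hdeg : (P.comp g).natDegree = m * g.natDegree * f.natDegree := by
    rw [natDegree_comp, hPd]; ring
  obtain ⟨q, h1, h2, h3⟩ := exists_trace f hf (m * g.natDegree) (P.comp g) hdeg.le
  have hcoeff : q.coeff (m * g.natDegree) =
      g.leadingCoeff ^ (m * f.natDegree) * (f.leadingCoeff ^ (m * g.natDegree))⁻¹ := by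
    rw [h2, ← hdeg, coeff_natDegree, leadingCoeff_comp hg.ne', hP.leadingCoeff, one_mul, hPd]
  have hc0 : q.coeff (m * g.natDegree) ≠ 0 := by rw [hcoeff]; positivity
  have hqd : q.natDegree = m * g.natDegree := le_antisymm h1 (le_natDegree_of_ne_zero hc0)
  have hlead : q.leadingCoeff = q.coeff (m * g.natDegree) := by rw [leadingCoeff, hqd]
  have hnorm : ‖q.coeff (m * g.natDegree)‖ = kap f g ^ m := by
    rw [hcoeff, kap, norm_mul, norm_inv, norm_pow, norm_pow, div_pow, ← pow_mul, ← pow_mul,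
      mul_comm m, mul_comm m]
    rfl
  refine ⟨C (q.leadingCoeff)⁻¹ * q, ?_, ?_, ?_⟩
  · rw [Monic, leadingCoeff_mul, leadingCoeff_C, inv_mul_cancel₀ (hlead ▸ hc0)]
  · rw [natDegree_C_mul (inv_ne_zero (hlead ▸ hc0)), hqd]
  · intro y hy
    have hk := kap_pos hf hg
    rw [eval_mul, eval_C, norm_mul, norm_inv, hlead, hnorm]
    have hd : (0 : ℝ) < f.natDegree := by exact_mod_cast hf
    have h4 : (f.natDegree : ℝ) * ‖q.eval y‖ ≤ f.natDegree * M := by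
      have e1 : (f.natDegree : ℝ) * ‖q.eval y‖ =
          ‖((f - C y).roots.map fun w => (P.comp g).eval w).sum‖ := by
        rw [h3, norm_mul, Complex.norm_natCast]
      rw [e1]
      refine (norm_multiset_sum_le _).trans ?_
      rw [Multiset.map_map]
      refine (Multiset.sum_le_card_nsmul _ M ?_).trans ?_
      · intro a ha
        simp only [Multiset.mem_map, Function.comp_apply] at ha
        obtain ⟨w, hw, rfl⟩ := ha
        rw [mem_roots_sub_C'' hf] at hw
        rw [eval_comp]
        exact hM _ (hinv w (hw ▸ hy))
      · rw [Multiset.card_map, card_roots_sub_C'', nsmul_eq_mul]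
    have h5 := le_of_mul_le_mul_left h4 hd
    have : (kap f g ^ m)⁻¹ * ‖q.eval y‖ * kap f g ^ m = ‖q.eval y‖ := by field_simp
    rw [this]
    exact h5

lemma exists_monic_iterate {f g : ℂ[X]} (hf : 0 < f.natDegree) (hg : 0 < g.natDegree)
    {K : Set ℂ} (hinv : ∀ v, f.eval v ∈ K → g.eval v ∈ K) (n : ℕ) :
    ∀ (m : ℕ) {P : ℂ[X]} (_ : P.Monic) (_ : P.natDegree = m * f.natDegree ^ n) {M : ℝ}
      (_ : ∀ y ∈ K, ‖P.eval y‖ ≤ M),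
    ∃ Q : ℂ[X], Q.Monic ∧ Q.natDegree = m * g.natDegree ^ n ∧
      ∀ y ∈ K, ‖Q.eval y‖ * kap f g ^ (m * geomExp f.natDegree g.natDegree n) ≤ M := by
  have hk := kap_pos hf hg
  induction n with
  | zero =>
    intro m P hP hPd M hM
    exact ⟨P, hP, by simpa using hPd, by simpa [geomExp] using hM⟩
  | succ n ih =>
    intro m P hP hPd M hM
    obtain ⟨Q1, h1, h2, h3⟩ := exists_monic_step hf hg hinv (m * f.natDegree ^ n) hP
      (by rw [hPd, pow_succ]; ring) hM
    obtain ⟨Q, h4, h5, h6⟩ := ih (m * g.natDegree) h1 (by rw [h2]; ring)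
      (M := M / kap f g ^ (m * f.natDegree ^ n))
      (fun y hy => by rw [le_div_iff₀ (by positivity)]; exact h3 y hy)
    refine ⟨Q, h4, by rw [h5, pow_succ]; ring, fun y hy => ?_⟩
    have := h6 y hy
    rw [le_div_iff₀ (by positivity)] at this
    rw [geomExp_succ']
    calc _ = _ := by ring
      _ ≤ M := this

/-- The infimum of the sup norms on `K` of the monic polynomials of degree `k`. -/
noncomputable def tau (K : Set ℂ) (k : ℕ) : ℝ :=
  sInf {M : ℝ | ∃ P : ℂ[X], P.Monic ∧ P.natDegree = k ∧ ∀ y ∈ K, ‖P.eval y‖ ≤ M}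

lemma tau_le {K : Set ℂ} (hK : K.Nonempty) {P : ℂ[X]} (hP : P.Monic) {M : ℝ}
    (hM : ∀ y ∈ K, ‖P.eval y‖ ≤ M) : tau K P.natDegree ≤ M := by
  obtain ⟨a, ha⟩ := hK
  refine csInf_le ⟨0, ?_⟩ ⟨P, hP, rfl, hM⟩
  rintro M' ⟨Q, -, -, h⟩
  exact (norm_nonneg _).trans (h a ha)

lemma exists_le_tau {K : Set ℂ} (hK : IsCompact K) {k : ℕ} {M : ℝ} (h : tau K k < M) :
    ∃ P : ℂ[X], P.Monic ∧ P.natDegree = k ∧ ∀ y ∈ K, ‖P.eval y‖ ≤ M := by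
  have hne : {M : ℝ | ∃ P : ℂ[X], P.Monic ∧ P.natDegree = k ∧ ∀ y ∈ K, ‖P.eval y‖ ≤ M}.Nonempty := by
    obtain ⟨M', hM'⟩ := hK.exists_bound_of_continuousOn
      (f := fun y => ((X : ℂ[X]) ^ k).eval y) (by fun_prop)
    exact ⟨M', X ^ k, monic_X_pow k, natDegree_X_pow k, hM'⟩
  obtain ⟨M', ⟨P, h1, h2, h3⟩, h4⟩ := exists_lt_of_csInf_lt hne h
  exact ⟨P, h1, h2, fun y hy => (h3 y hy).trans h4.le⟩

/-- Lagrange interpolation at `k + 1` points of `K` bounds monic polynomials of degree `k` from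
below. -/
lemma tau_pos {K : Set ℂ} (hK : IsCompact K) (hKinf : K.Infinite) (k : ℕ) : 0 < tau K k := by
  obtain ⟨s, hs, hcard⟩ := hKinf.exists_subset_card_eq (k + 1)
  set A := ∑ i ∈ s, ‖∏ j ∈ s.erase i, (i - j)‖⁻¹ with hA
  have hA0 : 0 < A := by
    refine Finset.sum_pos (fun i _ => inv_pos.mpr (norm_pos_iff.mpr ?_)) ?_
    · exact Finset.prod_ne_zero_iff.mpr fun j hj => sub_ne_zero.mpr (Finset.ne_of_mem_erase hj).symm
    · rw [← Finset.card_pos]; omega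
  refine (inv_pos.mpr hA0).trans_le ?_
  by_contra! hlt
  obtain ⟨M, h1, h2⟩ := exists_between hlt
  obtain ⟨P, hP, hPk, hPM⟩ := exists_le_tau hK h1
  have hl := Lagrange.leadingCoeff_eq_sum (s := s) (v := id) (P := P) (Function.injective_id.injOn)
    (by rw [hcard, degree_eq_natDegree hP.ne_zero, hPk]; norm_cast)
  rw [hP.leadingCoeff] at hl
  have h3 : (1 : ℝ) ≤ M * A := by
    calc (1 : ℝ) = ‖(1 : ℂ)‖ := by simp
      _ ≤ ∑ i ∈ s, M * ‖∏ j ∈ s.erase i, (i - j)‖⁻¹ := by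
        rw [hl]
        refine (norm_sum_le _ _).trans (Finset.sum_le_sum fun i hi => ?_)
        rw [norm_div, div_eq_mul_inv]
        exact mul_le_mul_of_nonneg_right (hPM i (hs hi)) (by positivity)
      _ = M * A := by rw [hA, Finset.mul_sum]
  have h4 : M * A < 1 := by
    calc M * A < A⁻¹ * A := by gcongr
      _ = 1 := inv_mul_cancel₀ hA0.ne'
  linarith

/-- Monic polynomials of degree `m * (deg f)ⁿ` are, up to an explicit factor, at least as large on `K`
as the best ones of degree `m * (deg g)ⁿ`. -/
lemma tau_mul_le {f g : ℂ[X]} (hf : 0 < f.natDegree) (hg : 0 < g.natDegree)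
    {K : Set ℂ} (hK : K.Nonempty) (hinv : ∀ v, f.eval v ∈ K → g.eval v ∈ K) (n m : ℕ) {P : ℂ[X]}
    (hP : P.Monic) (hPd : P.natDegree = m * f.natDegree ^ n) {M : ℝ}
    (hM : ∀ y ∈ K, ‖P.eval y‖ ≤ M) :
    tau K (m * g.natDegree ^ n) * kap f g ^ (m * geomExp f.natDegree g.natDegree n) ≤ M := by
  have hk := kap_pos hf hg
  obtain ⟨Q, h1, h2, h3⟩ := exists_monic_iterate hf hg hinv n m hP hPd hM
  rw [← le_div_iff₀ (by positivity), ← h2]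
  refine tau_le hK h1 fun y hy => ?_
  rw [le_div_iff₀ (by positivity)]
  exact h3 y hy

lemma eventually_two_mul_pow_le {d e : ℕ} (he : 0 < e) (h : e < d) :
    ∀ᶠ n in atTop, 2 * e ^ n ≤ d ^ n := by
  have he' : (0 : ℝ) < e := by exact_mod_cast he
  have h1 : (1 : ℝ) < d / e := by rw [one_lt_div he']; exact_mod_cast h
  filter_upwards [(tendsto_pow_atTop_atTop_of_one_lt h1).eventually_ge_atTop 2] with n hn
  rw [div_pow, le_div_iff₀ (by positivity)] at hn
  exact_mod_cast hn

/-- An infinite compact set `K` with `F⁻¹(K) ⊆ K` has positive capacity, in the form of a geometric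
lower bound for the sup norms of monic polynomials. Write `d = deg f`, `e = deg g`. A nearly optimal
monic polynomial of degree `N eⁿ`, raised to the power `q = ⌊dⁿ / eⁿ⌋ ≥ 2` and multiplied by a small
power of `X`, has degree `N dⁿ`, and averaging brings it back to degree `N eⁿ`. Hence
`tau * k ^ (N dⁿ) ≤ (2 tau) ^ q * D ^ (N eⁿ)`, which bounds `tau` below because `q > 1`. -/
lemma exists_pow_le_tau {f g : ℂ[X]} (hg : 0 < g.natDegree) (hgf : g.natDegree < f.natDegree)
    {K : Set ℂ} (hK : IsCompact K) (hKinf : K.Infinite)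
    (hinv : ∀ v, f.eval v ∈ K → g.eval v ∈ K) (N : ℕ) :
    ∃ c : ℝ, 0 < c ∧ ∀ᶠ n in atTop, c ^ (g.natDegree ^ n) ≤ tau K (N * g.natDegree ^ n) := by
  have hf : 0 < f.natDegree := hg.trans hgf
  have hk := kap_pos hf hg
  obtain ⟨D, hD1, hD⟩ : ∃ D : ℝ, 1 ≤ D ∧ ∀ y ∈ K, ‖y‖ ≤ D := by
    obtain ⟨D, hD⟩ := hK.exists_bound_of_continuousOn (f := fun y : ℂ => y) (by fun_prop)
    exact ⟨max 1 D, le_max_left _ _, fun y hy => (hD y hy).trans (le_max_right _ _)⟩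
  have hD0 : 0 < D := by linarith
  set k1 := min (kap f g) 1 with hk1
  have hk10 : 0 < k1 := lt_min hk one_pos
  have hk11 : k1 ≤ 1 := min_le_right _ _
  refine ⟨k1 ^ (3 * N) / D ^ N / 4, by positivity, ?_⟩
  filter_upwards [eventually_two_mul_pow_le hg hgf] with n hn
  set d := f.natDegree with hd
  set e := g.natDegree with he
  have hE : 0 < e ^ n := by positivity
  set E := e ^ n with hEdef
  set t := tau K (N * E) with ht
  have ht0 : 0 < t := tau_pos hK hKinf _
  obtain ⟨q, r, hqr, hr⟩ : ∃ q r, d ^ n = q * E + r ∧ r < E :=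
    ⟨d ^ n / E, d ^ n % E, (Nat.div_add_mod' _ _).symm, Nat.mod_lt _ hE⟩
  have hq : 2 ≤ q := by
    by_contra! h
    have : q ≤ 1 := by omega
    nlinarith
  obtain ⟨p, rfl⟩ : ∃ p, q = p + 1 := ⟨q - 1, by omega⟩
  have hp : 1 ≤ p := by omega
  obtain ⟨P, hP, hPd, hPM⟩ := exists_le_tau hK (show tau K (N * E) < 2 * t by linarith)
  have hmain : t * k1 ^ (N * d ^ n) ≤ (2 * t) ^ (p + 1) * D ^ (N * E) := by
    have h1 := tau_mul_le hf hg hKinf.nonempty hinv n N (P := P ^ (p + 1) * X ^ (N * r))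
      ((hP.pow _).mul (monic_X_pow _))
      (by rw [(hP.pow _).natDegree_mul (monic_X_pow _), hP.natDegree_pow, hPd, natDegree_X_pow,
            ← hd, hqr]; ring)
      (M := (2 * t) ^ (p + 1) * D ^ (N * E)) (fun y hy => by
        rw [eval_mul, eval_pow, eval_pow, eval_X, norm_mul, norm_pow, norm_pow]
        have h2 : ‖y‖ ^ (N * r) ≤ D ^ (N * E) :=
          (pow_le_pow_left₀ (norm_nonneg _) (hD y hy) _).trans
            (pow_le_pow_right₀ hD1 (Nat.mul_le_mul_left _ hr.le))
        have := hPM y hy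
        gcongr)
    refine le_trans ?_ h1
    rw [← hEdef, ← ht, ← hd, ← he]
    refine mul_le_mul_of_nonneg_left ?_ ht0.le
    calc k1 ^ (N * d ^ n) ≤ k1 ^ (N * geomExp d e n) :=
          pow_le_pow_of_le_one hk10.le hk11
            (Nat.mul_le_mul_left _ (by have := geomExp_add_le hgf n; omega))
      _ ≤ _ := pow_le_pow_left₀ hk10.le (min_le_left _ _) _
  -- Cancel one factor `t`, and bound every exponent by a multiple of `p`.
  have h2 : k1 ^ (N * d ^ n) ≤ t ^ p * 2 ^ (p + 1) * D ^ (N * E) := by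
    have : t * k1 ^ (N * d ^ n) ≤ t * (t ^ p * 2 ^ (p + 1) * D ^ (N * E)) := by
      refine hmain.trans (le_of_eq ?_)
      rw [mul_pow, pow_succ t]; ring
    exact le_of_mul_le_mul_left this ht0
  have h3 : (k1 ^ (3 * (N * E))) ^ p ≤ k1 ^ (N * d ^ n) := by
    rw [← pow_mul]
    refine pow_le_pow_of_le_one hk10.le hk11 ?_
    rw [hqr]
    have : (p + 1) * E + r ≤ 3 * E * p := by nlinarith
    calc N * ((p + 1) * E + r) ≤ N * (3 * E * p) := Nat.mul_le_mul_left _ this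
      _ = _ := by ring
  have h4 : (2 : ℝ) ^ (p + 1) ≤ 4 ^ p := by
    rw [show (4 : ℝ) = 2 ^ 2 by norm_num, ← pow_mul]
    exact pow_le_pow_right₀ (by norm_num) (by omega)
  have h5 : D ^ (N * E) ≤ (D ^ (N * E)) ^ p := le_self_pow₀ (one_le_pow₀ hD1) (by omega)
  have h6 : (k1 ^ (3 * (N * E))) ^ p ≤ (t * 4 * D ^ (N * E)) ^ p := by
    rw [mul_pow, mul_pow]
    refine h3.trans (h2.trans ?_)
    gcongr
  have h7 := le_of_pow_le_pow_left₀ (by omega) (by positivity) h6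
  rw [div_pow, div_pow, ← pow_mul, ← pow_mul, div_div, div_le_iff₀ (by positivity)]
  have h8 : (4 : ℝ) ≤ 4 ^ E := le_self_pow₀ (by norm_num) hE.ne'
  calc k1 ^ (3 * N * E) = k1 ^ (3 * (N * E)) := by ring_nf
    _ ≤ t * 4 * D ^ (N * E) := h7
    _ ≤ t * 4 ^ E * D ^ (N * E) := by gcongr
    _ = _ := by ring

/-! ### Moving poles off the polynomially convex hull -/

/-- Some polynomial without constant term in `1 / (y - x)` is uniformly close to `1` for `y ∈ K`. -/
def Removable (K : Set ℂ) (x : ℂ) : Prop :=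
  ∃ s : ℂ[X], s.coeff 0 = 0 ∧ ∃ ρ : ℝ, ρ < 1 ∧ ∀ y ∈ K, ‖1 - s.eval ((y - x)⁻¹)‖ ≤ ρ

/-- Expand `1 / (y - x')` in a geometric series in powers of `1 / (y - x)`, which converges uniformly
on `K`. -/
lemma Removable.of_close {K : Set ℂ} (hK : IsCompact K) {x x' : ℂ}
    (h : ∀ y ∈ K, ‖x' - x‖ < ‖y - x‖) (hx' : Removable K x') : Removable K x := by
  obtain ⟨s, hs, ρ, hρ, hsρ⟩ := hx'
  have : CompactSpace K := isCompact_iff_compactSpace.mp hK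
  have hne : ∀ y : K, (y : ℂ) - x ≠ 0 := fun y => norm_pos_iff.mp ((norm_nonneg _).trans_lt (h y y.2))
  let H : C(K, ℂ) := ⟨fun y => ((y : ℂ) - x)⁻¹, by fun_prop (disch := exact hne)⟩
  set c := x' - x with hc
  let u : C(K, ℂ) := c • H
  have hu : ‖u‖ < 1 := by
    rw [ContinuousMap.norm_lt_iff _ one_pos]
    intro y
    have := norm_pos_iff.mpr (hne y)
    simp only [u, H, ContinuousMap.smul_apply, ContinuousMap.coe_mk, smul_eq_mul, norm_mul, norm_inv]
    rw [mul_inv_lt_iff₀ this, one_mul]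
    exact h y y.2
  set T : C(K, ℂ) := H * ∑' i : ℕ, u ^ i with hT
  have hTy : ∀ y : K, T y = ((y : ℂ) - x')⁻¹ := by
    intro y
    have h1 : (1 - u) * ∑' i : ℕ, u ^ i = 1 := mul_neg_geom_series u hu
    have h2 : (1 - u) * T = H := by rw [hT, mul_left_comm, h1, mul_one]
    have h3 := congrArg (fun F : C(K, ℂ) => F y) h2
    simp only [ContinuousMap.mul_apply, ContinuousMap.sub_apply, ContinuousMap.one_apply, u, H,
      ContinuousMap.smul_apply, ContinuousMap.coe_mk, smul_eq_mul] at h3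
    have h4 := hne y
    have h5 : (y : ℂ) - x' ≠ 0 := by
      intro h0
      have := h y y.2
      rw [sub_eq_zero.mp h0] at this
      exact lt_irrefl _ this
    field_simp at h3
    refine eq_inv_of_mul_eq_one_left ?_
    rw [← h3, hc]
    ring
  let q : ℕ → ℂ[X] := fun m => ∑ i ∈ Finset.range m, X * (C c * X) ^ i
  have hq : Tendsto (fun m => aeval H (q m)) atTop (nhds T) := by
    have h1 : Tendsto (fun m => H * ∑ i ∈ Finset.range m, u ^ i) atTop (nhds T) :=
      ((summable_geometric_of_norm_lt_one hu).hasSum.tendsto_sum_nat).const_mul H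
    refine h1.congr fun m => ?_
    simp only [q, map_sum, map_mul, map_pow, aeval_X, aeval_C, Finset.mul_sum, u]
    simp [Algebra.smul_def]
  have hq2 : Tendsto (fun m => 1 - aeval (aeval H (q m)) s) atTop (nhds (1 - aeval T s)) := by
    have hcont : Continuous fun F : C(K, ℂ) => aeval F s := s.continuous_aeval
    exact tendsto_const_nhds.sub ((hcont.tendsto T).comp hq)
  have hev : ∀ (F : C(K, ℂ)) (p : ℂ[X]) (y : K), (aeval F p : C(K, ℂ)) y = p.eval (F y) :=
    fun F p y => aeval_continuousMap_apply p F y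
  have hlt : ‖1 - aeval T s‖ < 1 := by
    rw [ContinuousMap.norm_lt_iff _ one_pos]
    intro y
    rw [ContinuousMap.sub_apply, hev, hTy, ContinuousMap.one_apply]
    exact (hsρ y y.2).trans_lt hρ
  obtain ⟨m, hm⟩ := (hq2.norm.eventually_lt_const hlt).exists
  refine ⟨s.comp (q m), ?_, _, hm, fun y hy => ?_⟩
  · rw [coeff_zero_eq_eval_zero, eval_comp]
    have : (q m).eval 0 = 0 := by simp [q, eval_finsetSum]
    rw [this, ← coeff_zero_eq_eval_zero, hs]
  · have := ContinuousMap.norm_coe_le_norm (1 - aeval (aeval H (q m)) s : C(K, ℂ)) ⟨y, hy⟩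
    rw [ContinuousMap.sub_apply, hev, hev, ContinuousMap.one_apply] at this
    rwa [eval_comp]

lemma removable_of_large {K : Set ℂ} {D : ℝ} (hD : ∀ y ∈ K, ‖y‖ ≤ D) {x : ℂ} (hx : 3 * |D| + 1 ≤ ‖x‖) :
    Removable K x := by
  refine ⟨C (-x) * X, by simp, 1 / 2, by norm_num, fun y hy => ?_⟩
  have h1 : ‖y‖ ≤ |D| := (hD y hy).trans (le_abs_self _)
  have h0 := norm_nonneg y
  have h3 : ‖x‖ - ‖y‖ ≤ ‖y - x‖ := by rw [norm_sub_rev]; exact norm_sub_norm_le _ _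
  have h2 : 0 < ‖y - x‖ := by linarith
  have h4 : (1 : ℂ) - (C (-x) * X).eval ((y - x)⁻¹) = y * (y - x)⁻¹ := by
    have := norm_pos_iff.mp h2
    simp only [eval_mul, eval_C, eval_X]
    field_simp
    ring
  rw [h4, norm_mul, norm_inv, mul_inv_le_iff₀ h2]
  linarith

/-- `Removable K` is locally constant off `K` and holds far away, hence on the whole unbounded
component. -/
lemma removable_of_unbounded {K : Set ℂ} (hK : IsCompact K) {x : ℂ} (hx : x ∈ Kᶜ)
    (hb : ¬ Bornology.IsBounded (connectedComponentIn Kᶜ x)) : Removable K x := by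
  obtain ⟨D, hD⟩ := hK.exists_bound_of_continuousOn (f := fun y : ℂ => y) (by fun_prop)
  obtain ⟨x', hx', hx'D⟩ : ∃ x' ∈ connectedComponentIn Kᶜ x, 3 * |D| + 1 ≤ ‖x'‖ := by
    by_contra! h
    exact hb (Bornology.IsBounded.subset (Metric.isBounded_closedBall (x := 0) (r := 3 * |D| + 1))
      fun z hz => by simpa using (h z hz).le)
  refine IsPreconnected.induction₂ (isPreconnected_connectedComponentIn (x := x) (F := Kᶜ))
    (fun a b => (Removable K a ↔ Removable K b)) ?_ (fun a b c _ _ _ => Iff.trans)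
    (fun a b _ _ => Iff.symm) hx' (mem_connectedComponentIn hx) |>.mp
    (removable_of_large hD hx'D)
  intro a ha
  have haK : a ∈ Kᶜ := connectedComponentIn_subset _ _ ha
  obtain ⟨ε, hε, hball⟩ := Metric.isOpen_iff.mp hK.isClosed.isOpen_compl a haK
  have hfar : ∀ y ∈ K, ε ≤ ‖y - a‖ := fun y hy => by
    by_contra! h
    exact hball (by simpa [dist_eq_norm] using h) hy
  filter_upwards [mem_nhdsWithin_of_mem_nhds (Metric.ball_mem_nhds a (half_pos hε))] with b hb
  rw [Metric.mem_ball, dist_eq_norm] at hb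
  refine ⟨Removable.of_close hK fun y hy => ?_, Removable.of_close hK fun y hy => ?_⟩
  · have h1 := hfar y hy
    have h2 := norm_sub_le_norm_sub_add_norm_sub y b a
    rw [norm_sub_rev a b]
    linarith
  · have h1 := hfar y hy
    linarith

/-- For `x` in the unbounded component of the complement of `K`, the factor `(X - z)ᴺ` can, for
every `z` close to `x`, be replaced by a monic polynomial of the same degree that is smaller on `K`
by a fixed factor. -/
lemma exists_replacement {K : Set ℂ} (hK : IsCompact K) {x : ℂ} (hx : x ∈ Kᶜ)
    (hb : ¬ Bornology.IsBounded (connectedComponentIn Kᶜ x)) :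
    ∃ (δ ρ : ℝ) (N : ℕ) (r : ℂ[X]), 0 < δ ∧ 0 < ρ ∧ ρ < 1 ∧ r.Monic ∧ r.natDegree = N ∧
      ∀ z ∈ Metric.ball x δ, ∀ y ∈ K, ‖r.eval y‖ ≤ ρ * ‖y - z‖ ^ N := by
  obtain ⟨s, hs, ρ₀, hρ₀, hsρ⟩ := removable_of_unbounded hK hx hb
  obtain ⟨η, hη, hball⟩ := Metric.isOpen_iff.mp hK.isClosed.isOpen_compl x hx
  have hfar : ∀ y ∈ K, η ≤ ‖y - x‖ := fun y hy => by
    by_contra! h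
    exact hball (by simpa [dist_eq_norm] using h) hy
  -- With `t = y - x`, the polynomial `tᴺ - (reverse s)(t) = tᴺ (1 - s (1 / t))` is monic in `t`
  -- because `s` has no constant term.
  set N := s.natDegree with hN
  have hdeg : s.reverse.degree < N := by
    by_cases h0 : s = 0
    · simp [h0]
    · rw [degree_lt_iff_coeff_zero]
      intro m hm
      rcases hm.eq_or_lt with rfl | hm
      · rw [coeff_reverse, revAt_le le_rfl]
        simpa using hs
      · exact coeff_eq_zero_of_natDegree_lt ((reverse_natDegree_le s).trans_lt hm)
  have hmon : (X ^ N - s.reverse).Monic := monic_X_pow_sub (by exact hdeg)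
  have hnd : (X ^ N - s.reverse).natDegree = N := by
    rw [natDegree_eq_of_degree_eq (degree_sub_eq_left_of_degree_lt _), natDegree_X_pow]
    rwa [degree_X_pow]
  set ρ := max ρ₀ (1 / 2) with hρ
  have hρ1 : ρ < 1 := max_lt hρ₀ (by norm_num)
  have hρ0 : 0 < ρ := lt_of_lt_of_le (by norm_num) (le_max_right _ _)
  -- Moving the centre from `x` to `z` costs the factor `u ^ N`, absorbed by enlarging `ρ`.
  obtain ⟨u, hu, hu0, hu1⟩ : ∃ u : ℝ, ρ < (1 + ρ) / 2 * u ^ N ∧ 0 < u ∧ u < 1 := by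
    have hcont : Tendsto (fun u : ℝ => (1 + ρ) / 2 * u ^ N) (nhdsWithin 1 (Set.Iio 1))
        (nhds ((1 + ρ) / 2 * 1 ^ N)) :=
      (Continuous.tendsto (by fun_prop) 1).mono_left nhdsWithin_le_nhds
    have h1 := hcont.eventually_const_lt (u := ρ) (by rw [one_pow]; linarith)
    have h2 : ∀ᶠ u : ℝ in nhdsWithin 1 (Set.Iio 1), 0 < u :=
      nhdsWithin_le_nhds (lt_mem_nhds one_pos)
    exact (h1.and (h2.and self_mem_nhdsWithin)).exists
  refine ⟨(1 - u) * η, (1 + ρ) / 2, N, (X ^ N - s.reverse).comp (X - C x),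
    mul_pos (by linarith) hη, by linarith, by linarith, hmon.comp_X_sub_C x, ?_, ?_⟩
  · rw [natDegree_comp, hnd, natDegree_X_sub_C, mul_one]
  · intro z hz y hy
    rw [Metric.mem_ball, dist_eq_norm] at hz
    have hη' := hfar y hy
    have ht : y - x ≠ 0 := norm_pos_iff.mp (hη.trans_le hη')
    have h1 : ((X ^ N - s.reverse).comp (X - C x)).eval y =
        (y - x) ^ N * (1 - s.eval ((y - x)⁻¹)) := by
      let : Invertible (y - x)⁻¹ := invertibleOfNonzero (inv_ne_zero ht)
      have := eval₂_reverse_mul_pow (RingHom.id ℂ) (y - x)⁻¹ s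
      simp only [invOf_eq_inv, inv_inv, ← eval₂_id, ← hN] at this ⊢
      simp only [eval₂_id] at this ⊢
      rw [← this, eval_comp]
      have h0 : (y - x) ^ N * (y - x)⁻¹ ^ N = 1 := by
        rw [← mul_pow, mul_inv_cancel₀ ht, one_pow]
      simp only [eval_sub, eval_pow, eval_X, eval_C]
      linear_combination eval (y - x) s.reverse * h0
    have h2 : u * ‖y - x‖ ≤ ‖y - z‖ := by
      have h3 := norm_sub_le_norm_sub_add_norm_sub y z x
      nlinarith
    rw [h1, norm_mul, norm_pow, mul_comm]
    calc ‖1 - s.eval ((y - x)⁻¹)‖ * ‖y - x‖ ^ N ≤ ρ * ‖y - x‖ ^ N := by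
          gcongr; exact (hsρ y hy).trans (le_max_left _ _)
      _ ≤ (1 + ρ) / 2 * u ^ N * ‖y - x‖ ^ N := by gcongr
      _ = (1 + ρ) / 2 * (u * ‖y - x‖) ^ N := by rw [mul_pow]; ring
      _ ≤ (1 + ρ) / 2 * ‖y - z‖ ^ N := by gcongr

/-! ### Counting backward images near a point -/

open Classical in
/-- In `∏ (X - z)ᴺ`, replace the factors with `z ∈ U` by `r`. -/
lemma exists_prod_replacement {K : Set ℂ} {U : Set ℂ} {ρ : ℝ} (hρ : 0 < ρ) {N : ℕ} {r : ℂ[X]}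
    (hr : r.Monic) (hrd : r.natDegree = N)
    (h : ∀ z ∈ U, ∀ y ∈ K, ‖r.eval y‖ ≤ ρ * ‖y - z‖ ^ N) (S : Multiset ℂ) :
    ∃ P : ℂ[X], P.Monic ∧ P.natDegree = N * S.card ∧
      ∀ y ∈ K, ‖P.eval y‖ ≤ ρ ^ S.countP (· ∈ U) * (S.map fun z => ‖y - z‖).prod ^ N := by
  induction S using Multiset.induction with
  | empty => exact ⟨1, monic_one, by simp, by simp⟩
  | cons z S ih =>
    obtain ⟨P, h1, h2, h3⟩ := ih
    have hprod : ∀ y : ℂ, 0 ≤ (S.map fun z => ‖y - z‖).prod := fun y =>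
      Multiset.prod_nonneg fun a ha => by
        obtain ⟨b, -, rfl⟩ := Multiset.mem_map.mp ha
        exact norm_nonneg _
    by_cases hz : z ∈ U
    · refine ⟨r * P, hr.mul h1, ?_, fun y hy => ?_⟩
      · rw [hr.natDegree_mul h1, hrd, h2, Multiset.card_cons]; ring
      · rw [Multiset.countP_cons_of_pos _ hz, Multiset.map_cons, Multiset.prod_cons, eval_mul, norm_mul]
        calc _ ≤ (ρ * ‖y - z‖ ^ N) * (ρ ^ S.countP (· ∈ U) * (S.map fun z => ‖y - z‖).prod ^ N) := by
              gcongr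
              · exact h z hz y hy
              · exact h3 y hy
          _ = _ := by ring
    · refine ⟨(X - C z) ^ N * P, ((monic_X_sub_C z).pow N).mul h1, ?_, fun y hy => ?_⟩
      · rw [((monic_X_sub_C z).pow N).natDegree_mul h1, natDegree_pow, natDegree_X_sub_C, h2,
          Multiset.card_cons]
        ring
      · rw [Multiset.countP_cons_of_neg _ hz, Multiset.map_cons, Multiset.prod_cons, eval_mul, norm_mul]
        calc _ ≤ ‖y - z‖ ^ N * (ρ ^ S.countP (· ∈ U) * (S.map fun z => ‖y - z‖).prod ^ N) := by
              gcongr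
              · simp
              · exact h3 y hy
          _ = _ := by ring

open Classical in
/-- Each point of the backward orbit near `x` lets one shrink the polynomial with roots at the orbit
by a factor `ρ` on `K`. As that polynomial is within `C ^ (deg g)ⁿ` of the minimal norm, there are
`O((deg g)ⁿ)` such points. -/
lemma countP_backOrbit_le {f g : ℂ[X]} (hg : 0 < g.natDegree) (hgf : g.natDegree < f.natDegree)
    {K : Set ℂ} (hK : IsCompact K) (hKinf : K.Infinite)
    (hinv : ∀ v, f.eval v ∈ K → g.eval v ∈ K) (hfwd : ∀ v, g.eval v ∈ K → f.eval v ∈ K)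
    {x : ℂ} (hx : x ∈ Kᶜ) (hb : ¬ Bornology.IsBounded (connectedComponentIn Kᶜ x))
    {R : ℝ} (hR : 0 < R) :
    ∃ δ A : ℝ, 0 < δ ∧ ∀ᶠ n in atTop, ∀ ζ : ℂ, (∀ y ∈ K, ‖ζ - y‖ ≤ R) →
      ((backOrbit f g n ζ).countP (· ∈ Metric.ball x δ) : ℝ) ≤ A * (g.natDegree : ℝ) ^ n := by
  have hf : 0 < f.natDegree := hg.trans hgf
  obtain ⟨δ, ρ, N, r, hδ, hρ0, hρ1, hr, hrd, hrz⟩ := exists_replacement hK hx hb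
  obtain ⟨c, hc, hcn⟩ := exists_pow_le_tau hg hgf hK hKinf hinv N
  have hlog : 0 < -Real.log ρ := neg_pos.mpr (Real.log_neg hρ0 hρ1)
  refine ⟨δ, (N * Real.log R - Real.log c) / (-Real.log ρ), hδ, hcn.mono fun n hn ζ hζ => ?_⟩
  obtain ⟨P, h1, h2, h3⟩ := exists_prod_replacement hρ0 hr hrd hrz (backOrbit f g n ζ)
  set k := (backOrbit f g n ζ).countP (· ∈ Metric.ball x δ) with hk
  set G := geomExp f.natDegree g.natDegree n
  set E := g.natDegree ^ n with hE
  have hκ := kap_pos hf hg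
  rw [card_backOrbit] at h2
  have h4 : ∀ y ∈ K, ‖P.eval y‖ ≤ ρ ^ k * (kap f g ^ G * R ^ E) ^ N := fun y hy => by
    refine (h3 y hy).trans ?_
    gcongr
    · refine Multiset.prod_nonneg fun a ha => ?_
      obtain ⟨b, -, rfl⟩ := Multiset.mem_map.mp ha
      exact norm_nonneg _
    · exact prod_norm_backOrbit_le hf hg hfwd n hy hζ
  have h5 := tau_mul_le hf hg hKinf.nonempty hinv n N h1 h2 h4
  have h6 : c ^ E ≤ ρ ^ k * R ^ (E * N) := by
    have h7 : ρ ^ k * (kap f g ^ G * R ^ E) ^ N = ρ ^ k * R ^ (E * N) * kap f g ^ (N * G) := by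
      rw [mul_pow, ← pow_mul, ← pow_mul, mul_comm G N]; ring
    rw [h7] at h5
    exact hn.trans (le_of_mul_le_mul_right h5 (by positivity))
  have h8 := Real.log_le_log (by positivity) h6
  rw [Real.log_mul (by positivity) (by positivity), Real.log_pow, Real.log_pow, Real.log_pow] at h8
  have h9 : ((g.natDegree : ℝ)) ^ n = (E : ℝ) := by rw [hE]; push_cast; rfl
  rw [h9, div_mul_eq_mul_div, le_div_iff₀ hlog]
  push_cast at h8
  linarith

/-! ### Components of the complement -/

/-- Membership in the unbounded component of the complement of `K`. -/
def InOuter (K : Set ℂ) (x : ℂ) : Prop :=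
  x ∈ Kᶜ ∧ ¬ Bornology.IsBounded (connectedComponentIn Kᶜ x)

/-- If the component `V` of `w` in the complement of `f⁻¹(K) = g⁻¹(K)` were bounded, then `f(V)` would be
open and relatively closed off `K`, so it would contain the component of `f w`. So `V` is unbounded,
and `g(V)` is an unbounded connected subset of the complement of `K`. -/
lemma InOuter.step {f g : ℂ[X]} (hf : 0 < f.natDegree) (hg : 0 < g.natDegree)
    {K : Set ℂ} (hK : IsCompact K)
    (hfwd : ∀ v, g.eval v ∈ K → f.eval v ∈ K)
    {w : ℂ} (h : InOuter K (f.eval w)) : InOuter K (g.eval w) := by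
  obtain ⟨hw, hb⟩ := h
  refine ⟨fun h => hw (hfwd w h), fun hgb => hb ?_⟩
  set L : Set ℂ := (fun v => f.eval v) ⁻¹' K with hL
  have hLo : IsOpen Lᶜ := (hK.isClosed.preimage f.continuous).isOpen_compl
  have hwL : w ∈ Lᶜ := hw
  set V := connectedComponentIn Lᶜ w with hV
  have hwV : w ∈ V := mem_connectedComponentIn hwL
  have hVo : IsOpen V := hLo.connectedComponentIn
  have hVL : V ⊆ Lᶜ := connectedComponentIn_subset _ _
  have hVc : IsPreconnected V := isPreconnected_connectedComponentIn
  -- `g` is proper and maps `V` into the component of `g w`.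
  have hVb : Bornology.IsBounded V := by
    have h1 : (fun v => g.eval v) '' V ⊆ connectedComponentIn Kᶜ (g.eval w) := by
      refine (hVc.image _ g.continuous.continuousOn).subset_connectedComponentIn ⟨w, hwV, rfl⟩ ?_
      rintro _ ⟨v, hv, rfl⟩ hvK
      exact hVL hv (hfwd v hvK)
    obtain ⟨B, hB⟩ := (hgb.subset h1).exists_norm_le
    have h2 : Tendsto (fun z : ℂ => ‖g.eval z‖) (Bornology.cobounded ℂ) atTop :=
      g.tendsto_norm_atTop (natDegree_pos_iff_degree_pos.mp hg) tendsto_norm_cobounded_atTop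
    have h3 := h2.eventually_gt_atTop B
    rw [← Bornology.isCobounded_compl_iff, Bornology.isCobounded_def]
    filter_upwards [h3] with z hz hzV
    exact absurd (hB _ ⟨z, hzV, rfl⟩) (not_le.mpr hz)
  have hfo : IsOpen ((fun v => f.eval v) '' V) :=
    (f.isOpenQuotientMap_eval hf.ne').isOpenMap _ hVo
  have hcl : closure ((fun v => f.eval v) '' V) ⊆ (fun v => f.eval v) '' closure V :=
    closure_minimal (Set.image_mono subset_closure)
      (hVb.isCompact_closure.image f.continuous).isClosed
  have hsub : connectedComponentIn Kᶜ (f.eval w) ⊆ (fun v => f.eval v) '' V := by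
    refine isPreconnected_connectedComponentIn.subset_of_closure_inter_subset hfo
      ⟨f.eval w, mem_connectedComponentIn hw, w, hwV, rfl⟩ ?_
    rintro y ⟨hy, hyK⟩
    obtain ⟨p, hp, rfl⟩ := hcl hy
    refine ⟨p, ?_, rfl⟩
    have hpL : p ∈ Lᶜ := fun hpK => connectedComponentIn_subset _ _ hyK hpK
    obtain ⟨q, hq1, hq2⟩ := mem_closure_iff.mp hp _ (hLo.connectedComponentIn (x := p))
      (mem_connectedComponentIn hpL)
    rw [hV, connectedComponentIn_eq hq2, ← connectedComponentIn_eq hq1]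
    exact mem_connectedComponentIn hpL
  exact (((hVb.isCompact_closure.image f.continuous).isBounded).subset
    (Set.image_mono subset_closure)).subset hsub

lemma InOuter.of_mem_backOrbit {f g : ℂ[X]} (hf : 0 < f.natDegree) (hg : 0 < g.natDegree)
    {K : Set ℂ} (hK : IsCompact K)
    (hfwd : ∀ v, g.eval v ∈ K → f.eval v ∈ K)
    (n : ℕ) {ζ z : ℂ} (h : InOuter K ζ) (hz : z ∈ backOrbit f g n ζ) : InOuter K z := by
  induction n generalizing ζ with
  | zero => rw [backOrbit, Multiset.mem_singleton] at hz; rwa [hz]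
  | succ n ih =>
    obtain ⟨w, hw, hz⟩ := Multiset.mem_bind.mp hz
    rw [mem_roots_sub_C'' hf] at hw
    exact ih (InOuter.step hf hg hK hfwd (by rwa [hw])) hz

lemma inOuter_of_large {K : Set ℂ} {D : ℝ} (hD : ∀ y ∈ K, ‖y‖ ≤ D) (hD0 : 0 ≤ D) {x : ℂ}
    (hx : D < ‖x‖) : InOuter K x := by
  have hsub : (fun t : ℝ => (t : ℂ) * x) '' Set.Ici 1 ⊆ Kᶜ := by
    rintro _ ⟨t, ht, rfl⟩ hmem
    have h1 := hD _ hmem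
    have ht : (1 : ℝ) ≤ t := ht
    rw [norm_mul, Complex.norm_real, Real.norm_of_nonneg (by linarith)] at h1
    nlinarith
  have hx1 : x ∈ (fun t : ℝ => (t : ℂ) * x) '' Set.Ici 1 := ⟨1, Set.mem_Ici.mpr le_rfl, by simp⟩
  refine ⟨hsub hx1, fun hb => ?_⟩
  have hpre : IsPreconnected ((fun t : ℝ => (t : ℂ) * x) '' Set.Ici 1) :=
    isPreconnected_Ici.image _ (by fun_prop)
  obtain ⟨B, hB⟩ := (hb.subset (hpre.subset_connectedComponentIn hx1 hsub)).exists_norm_le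
  have hx0 : 0 < ‖x‖ := hD0.trans_lt hx
  have h1 := hB _ ⟨max 1 ((B + 1) / ‖x‖), Set.mem_Ici.mpr (le_max_left _ _), rfl⟩
  rw [norm_mul, Complex.norm_real,
    Real.norm_of_nonneg (zero_le_one.trans (le_max_left _ _))] at h1
  have h2 : (B + 1) / ‖x‖ * ‖x‖ ≤ max 1 ((B + 1) / ‖x‖) * ‖x‖ := by
    gcongr; exact le_max_right _ _
  rw [div_mul_cancel₀ _ hx0.ne'] at h2
  linarith

open Classical in
/-- The bound of `countP_backOrbit_le` near every point off `K`: near a point of a bounded component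
there are no backward images of points of the unbounded component. -/
lemma countP_backOrbit_le' {f g : ℂ[X]} (hg : 0 < g.natDegree) (hgf : g.natDegree < f.natDegree)
    {K : Set ℂ} (hK : IsCompact K) (hKinf : K.Infinite)
    (hinv : ∀ v, f.eval v ∈ K → g.eval v ∈ K) (hfwd : ∀ v, g.eval v ∈ K → f.eval v ∈ K)
    {x : ℂ} (hx : x ∈ Kᶜ) {R : ℝ} (hR : 0 < R) :
    ∃ δ A : ℝ, 0 < δ ∧ ∀ᶠ n in atTop, ∀ ζ : ℂ, InOuter K ζ → (∀ y ∈ K, ‖ζ - y‖ ≤ R) →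
      ((backOrbit f g n ζ).countP (· ∈ Metric.ball x δ) : ℝ) ≤ A * (g.natDegree : ℝ) ^ n := by
  by_cases hb : Bornology.IsBounded (connectedComponentIn Kᶜ x)
  · obtain ⟨δ, hδ, hball⟩ := Metric.isOpen_iff.mp hK.isClosed.isOpen_compl x hx
    refine ⟨δ, 0, hδ, Eventually.of_forall fun n ζ hζ _ => ?_⟩
    rw [zero_mul]
    refine le_of_eq ?_
    norm_cast
    rw [Multiset.countP_eq_zero]
    intro z hz hzx
    have hz' := InOuter.of_mem_backOrbit (hg.trans hgf) hg hK hfwd n hζ hz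
    have hmem : z ∈ connectedComponentIn Kᶜ x :=
      (convex_ball x δ).isPreconnected.subset_connectedComponentIn (Metric.mem_ball_self hδ)
        hball hzx
    exact hz'.2 (by rwa [← connectedComponentIn_eq hmem])
  · obtain ⟨δ, A, hδ, h⟩ := countP_backOrbit_le hg hgf hK hKinf hinv hfwd hx hb hR
    exact ⟨δ, A, hδ, h.mono fun n hn ζ _ hζ => hn ζ hζ⟩

/-! ### The support -/

open Classical in
lemma abs_Lam_iterate_le (f g : ℂ[X]) {U : Set ℂ} {φ : ℂ → ℝ} (h1 : ∀ z, |φ z| ≤ 1)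
    (hU : ∀ z ∉ U, φ z = 0) (n : ℕ) (ζ : ℂ) :
    |(Lam f g)^[n] φ ζ| ≤ ((f.natDegree : ℝ)⁻¹) ^ n * (backOrbit f g n ζ).countP (· ∈ U) := by
  rw [Lam_iterate, abs_mul, abs_of_nonneg (by positivity : (0 : ℝ) ≤ ((f.natDegree : ℝ)⁻¹) ^ n)]
  gcongr
  induction backOrbit f g n ζ using Multiset.induction with
  | empty => simp
  | cons z S ih =>
    rw [Multiset.map_cons, Multiset.sum_cons]
    refine (abs_add_le _ _).trans ?_
    by_cases hz : z ∈ U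
    · rw [Multiset.countP_cons_of_pos _ hz]
      push_cast
      linarith [h1 z]
    · rw [Multiset.countP_cons_of_neg _ hz, hU z hz, abs_zero, zero_add]
      exact ih

/-- Normalised Lebesgue measure on a disc is an admissible initial measure. -/
lemma exists_uniform_measure (a : ℂ) :
    ∃ ν : Measure ℂ, IsProbabilityMeasure ν ∧ ν (Metric.closedBall a 1)ᶜ = 0 ∧
      ∃ h : ℂ → ℝ≥0∞, (∃ B : ℝ≥0∞, B < ⊤ ∧ ∀ z, h z ≤ B) ∧ ν = volume.withDensity h := by
  set s := Metric.closedBall a 1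
  have hs : MeasurableSet s := Metric.isClosed_closedBall.measurableSet
  have h0 : volume s ≠ 0 := (Metric.measure_closedBall_pos volume a one_pos).ne'
  have ht : volume s ≠ ⊤ := (isCompact_closedBall a 1).measure_lt_top.ne
  refine ⟨volume.withDensity (s.indicator fun _ => (volume s)⁻¹), ⟨?_⟩, ?_, _,
    ⟨(volume s)⁻¹, ENNReal.inv_lt_top.mpr (pos_iff_ne_zero.mpr h0), fun z => ?_⟩, rfl⟩
  · rw [withDensity_apply _ MeasurableSet.univ, Measure.restrict_univ, lintegral_indicator hs,
      setLIntegral_const, ENNReal.inv_mul_cancel h0 ht]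
  · rw [withDensity_apply _ hs.compl, lintegral_indicator hs, Measure.restrict_restrict hs]
    simp
  · exact Set.indicator_le_self' (fun _ _ => zero_le) z

theorem support_subset_of_totally_invariant
    (f g : Polynomial ℂ) (hdeg : g.degree < f.degree) (hg : 1 ≤ g.degree)
    (μ : Measure ℂ) (hμ : IsEquilibrium f g μ)
    (K : Set ℂ) (hK : IsCompact K) (hKinf : K.Infinite)
    (hinv : (fun w => g.eval w) '' ((fun w => f.eval w) ⁻¹' K) = K)
    (hfwd : (fun w => f.eval w) '' ((fun w => g.eval w) ⁻¹' K) = K) :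
    measSupport μ ⊆ K := by
  classical
  have hg0 : 0 < g.natDegree :=
    natDegree_pos_iff_degree_pos.mpr (lt_of_lt_of_le (by norm_num) hg)
  have hgf : g.natDegree < f.natDegree := by
    have hgne : g ≠ 0 := by rintro rfl; simp at hg0
    exact (natDegree_lt_natDegree_iff hgne).mpr hdeg
  have hinv' : ∀ v, f.eval v ∈ K → g.eval v ∈ K := fun v hv => hinv.subset ⟨v, hv, rfl⟩
  have hfwd' : ∀ v, g.eval v ∈ K → f.eval v ∈ K := fun v hv => hfwd.subset ⟨v, hv, rfl⟩
  obtain ⟨hprob, -, hlim⟩ := hμ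
  intro x hxμ
  by_contra hx
  obtain ⟨D, hD0, hD⟩ : ∃ D : ℝ, 0 ≤ D ∧ ∀ y ∈ K, ‖y‖ ≤ D := by
    obtain ⟨D, hD⟩ := hK.exists_bound_of_continuousOn (f := fun y : ℂ => y) (by fun_prop)
    exact ⟨max 0 D, le_max_left _ _, fun y hy => (hD y hy).trans (le_max_right _ _)⟩
  obtain ⟨δ, A, hδ, hcount⟩ := countP_backOrbit_le' hg0 hgf hK hKinf hinv' hfwd' hx
    (R := 2 * D + 3) (by linarith)
  obtain ⟨ν, hν, hνs, hνd⟩ := exists_uniform_measure ((D + 2 : ℝ) : ℂ)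
  let φ : ℂ → ℝ := fun z => max 0 (1 - ‖z - x‖ / δ)
  have hφc : Continuous φ := by fun_prop
  have hφ0 : ∀ z, 0 ≤ φ z := fun z => le_max_left _ _
  have hφ1 : ∀ z, |φ z| ≤ 1 := fun z => by
    rw [abs_of_nonneg (hφ0 z)]
    have : 0 ≤ ‖z - x‖ / δ := by positivity
    exact max_le zero_le_one (by linarith)
  have hφU : ∀ z ∉ Metric.ball x δ, φ z = 0 := fun z hz => by
    rw [Metric.mem_ball, dist_eq_norm, not_lt] at hz
    have : 1 ≤ ‖z - x‖ / δ := by rwa [one_le_div hδ]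
    exact max_eq_left (by linarith)
  have hconv := hlim ν hν ⟨_, isCompact_closedBall _ _, hνs⟩ hνd φ hφc ⟨1, hφ1⟩
  -- On the disc carrying `ν` the iterates tend to zero uniformly, like `(deg g / deg f)ⁿ`.
  have hzero : Tendsto (fun n => ∫ z, ((Lam f g)^[n] φ) z ∂ν) atTop (nhds 0) := by
    have hd0 : (0 : ℝ) < f.natDegree := by exact_mod_cast hg0.trans hgf
    have hq : Tendsto (fun n : ℕ => A * ((g.natDegree : ℝ) / f.natDegree) ^ n) atTop (nhds 0) := by
      rw [← mul_zero A]
      refine (tendsto_pow_atTop_nhds_zero_of_lt_one (by positivity) ?_).const_mul A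
      rw [div_lt_one hd0]
      exact_mod_cast hgf
    refine squeeze_zero_norm' (hcount.mono fun n hn => ?_) hq
    have hae : ∀ᵐ z ∂ν, ‖((Lam f g)^[n] φ) z‖ ≤ A * ((g.natDegree : ℝ) / f.natDegree) ^ n := by
      filter_upwards [show ∀ᵐ z ∂ν, z ∈ Metric.closedBall ((D + 2 : ℝ) : ℂ) 1 from hνs] with ζ hζ
      rw [Metric.mem_closedBall, dist_eq_norm] at hζ
      have hnorm : ‖((D + 2 : ℝ) : ℂ)‖ = D + 2 := by
        rw [Complex.norm_real, Real.norm_of_nonneg (by linarith)]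
      have h1 := norm_sub_norm_le ((D + 2 : ℝ) : ℂ) ζ
      rw [norm_sub_rev] at h1
      have h2 := norm_le_norm_add_norm_sub' ζ ((D + 2 : ℝ) : ℂ)
      have h3 := hn ζ (inOuter_of_large hD hD0 (by linarith)) fun y hy =>
        (norm_sub_le _ _).trans (by linarith [hD y hy])
      calc ‖((Lam f g)^[n] φ) ζ‖
          ≤ ((f.natDegree : ℝ)⁻¹) ^ n * (backOrbit f g n ζ).countP (· ∈ Metric.ball x δ) :=
            abs_Lam_iterate_le f g hφ1 hφU n ζ
        _ ≤ ((f.natDegree : ℝ)⁻¹) ^ n * (A * (g.natDegree : ℝ) ^ n) := by gcongr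
        _ = A * ((g.natDegree : ℝ) / f.natDegree) ^ n := by rw [div_eq_mul_inv, mul_pow]; ring
    simpa using norm_integral_le_of_norm_le_const hae
  have hint0 : ∫ z, φ z ∂μ = 0 := tendsto_nhds_unique hconv hzero
  have hφint : Integrable φ μ := Integrable.of_bound hφc.aestronglyMeasurable 1
    (Eventually.of_forall hφ1)
  rw [integral_eq_zero_iff_of_nonneg hφ0 hφint] at hint0
  refine (hxμ δ hδ).ne' (measure_mono_null (fun z hz => ?_) hint0)
  rw [Metric.mem_ball, dist_eq_norm] at hz
  have h1 : 0 < φ z := lt_max_of_lt_right (by have := (div_lt_one hδ).mpr hz; linarith)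
  exact h1.ne'
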